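/- Let E_1 < E_2 < ... < E_d be distinct real numbers and let p be a probability distribution on {E_1,...,E_d} with mean ε = Σ_i p(E_i) E_i. Then there exist K ≤ d−1, nonnegative weights p_1,...,p_K summing to 1, and probability distributions q_1,...,q_K on {E_1,...,E_d} such that: (i) each q_k is supported on at most two points, (ii) each q_k has mean Σ_i q_k(E_i) E_i = ε, and (iii) p = Σ_k p_k q_k. Consequently, Σ_k p_k Var(q_k) = Var(p), where Var(q) = Σ_i q(E_i) E_i² − (Σ_i q(E_i) E_i)². -/

import Mathlib

lemma tp_extract {d : ℕ} (x p : Fin d → ℝ) (hp : ∀ i, 0 ≤ p i) (h0 : ∑ i, p i * x i = 0)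
    (hne : ∃ i, p i ≠ 0) :
    ∃ r : Fin d → ℝ, (∀ i, 0 ≤ r i) ∧ (∀ i, r i ≤ p i) ∧ (∃ i, r i ≠ 0) ∧
      (({i | r i ≠ 0} : Set (Fin d)).ncard ≤ 2) ∧ (∑ i, r i * x i = 0) ∧
      (∃ i, p i ≠ 0 ∧ r i = p i) := by
  by_cases hz : ∃ i, p i ≠ 0 ∧ x i = 0
  · obtain ⟨i, hi, hxi⟩ := hz
    refine ⟨Pi.single i (p i), ?_, ?_, ⟨i, by simpa using hi⟩, ?_, ?_, ⟨i, hi, by simp⟩⟩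
    · intro k
      by_cases h : k = i
      · subst h; simpa using hp k
      · simp [h]
    · intro k
      by_cases h : k = i
      · subst h; simp
      · simpa [h] using hp k
    · have : ({k | (Pi.single i (p i) : Fin d → ℝ) k ≠ 0} : Set (Fin d)) ⊆ {i} := by
        intro k hk
        by_contra h
        apply hk
        have h' : k ≠ i := h
        simp [h']
      have := Set.ncard_le_ncard this (Set.toFinite _)
      simp only [Set.ncard_singleton] at this
      omega
    · rw [Finset.sum_eq_single i]
      · simp [hxi]
      · intro b _ hb
        simp [hb]
      · simp
  · push Not at hz
    obtain ⟨k, hk⟩ := hne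
    have hnz : ∃ i ∈ Finset.univ, p i * x i ≠ 0 := ⟨k, by simp, mul_ne_zero hk (hz k hk)⟩
    obtain ⟨j, -, hj⟩ := Finset.exists_pos_of_sum_zero_of_exists_nonzero _ h0 hnz
    obtain ⟨i, -, hi⟩ := Finset.exists_pos_of_sum_zero_of_exists_nonzero
      (s := Finset.univ) (fun i => - (p i * x i)) (by simp [h0]) (by simpa using hnz)
    have hxj : 0 < x j := pos_of_mul_pos_right hj (hp j)
    have hpj : 0 < p j := pos_of_mul_pos_left hj hxj.le
    have hi' : 0 < p i * (- x i) := by linarith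
    have hxi : 0 < - x i := pos_of_mul_pos_right hi' (hp i)
    have hpi : 0 < p i := pos_of_mul_pos_left hi' hxi.le
    have hij : i ≠ j := by rintro rfl; linarith
    set t := min (p i / x j) (p j / (- x i)) with ht
    have htpos : 0 < t := lt_min (by positivity) (by positivity)
    have h1 : t * x j ≤ p i := by
      rw [← le_div_iff₀ hxj]; exact min_le_left _ _
    have h2 : t * (- x i) ≤ p j := by
      rw [← le_div_iff₀ hxi]; exact min_le_right _ _
    have h3 : t * x j = p i ∨ t * (- x i) = p j := by
      rw [← eq_div_iff hxj.ne', ← eq_div_iff hxi.ne']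
      exact min_choice _ _
    set r : Fin d → ℝ := fun k => if k = i then t * x j else if k = j then t * (- x i) else 0
      with hr
    have ri : r i = t * x j := by simp [hr]
    have rj : r j = t * (- x i) := by simp [hr, hij.symm]
    have rk : ∀ k, k ≠ i → k ≠ j → r k = 0 := by
      intro k h h'; simp [hr, h, h']
    clear_value r t
    refine ⟨r, ?_, ?_, ⟨i, ?_⟩, ?_, ?_, ?_⟩
    · intro k
      by_cases h : k = i
      · subst h; rw [ri]; positivity
      by_cases h' : k = j
      · subst h'; rw [rj]; positivity
      rw [rk k h h']
    · intro k
      by_cases h : k = i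
      · subst h; rw [ri]; exact h1
      by_cases h' : k = j
      · subst h'; rw [rj]; exact h2
      rw [rk k h h']; exact hp k
    · rw [ri]; positivity
    · have : ({k | r k ≠ 0} : Set (Fin d)) ⊆ {i, j} := by
        intro k hk
        by_contra h
        simp only [Set.mem_insert_iff, Set.mem_singleton_iff, not_or] at h
        exact hk (rk k h.1 h.2)
      refine (Set.ncard_le_ncard this (Set.toFinite _)).trans ?_
      rw [Set.ncard_pair hij]
    · rw [Finset.sum_eq_add i j hij]
      · rw [ri, rj]; ring
      · intro c _ hc
        rw [rk c hc.1 hc.2, zero_mul]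
      · simp
      · simp
    · rcases h3 with h | h
      · exact ⟨i, hpi.ne', by rw [ri, h]⟩
      · exact ⟨j, hpj.ne', by rw [rj, h]⟩

lemma tp_decomp {d : ℕ} (x : Fin d → ℝ) (n : ℕ) : ∀ (p : Fin d → ℝ), (∀ i, 0 ≤ p i) →
    (∑ i, p i * x i = 0) → (∃ i, p i ≠ 0) → (({i | p i ≠ 0} : Set (Fin d)).ncard ≤ n + 2) →
    ∃ K : ℕ, K ≤ n + 1 ∧ ∃ r : Fin K → Fin d → ℝ, (∀ k i, 0 ≤ r k i) ∧ (∀ k, ∃ i, r k i ≠ 0) ∧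
      (∀ k, ({i | r k i ≠ 0} : Set (Fin d)).ncard ≤ 2) ∧ (∀ k, ∑ i, r k i * x i = 0) ∧
      (∀ i, p i = ∑ k, r k i) := by
  induction n with
  | zero =>
    intro p hp h0 hne hc
    exact ⟨1, le_rfl, fun _ => p, fun _ => hp, fun _ => hne, fun _ => hc, fun _ => h0,
      fun i => by simp⟩
  | succ n ih =>
    intro p hp h0 hne hc
    by_cases hc' : ({i | p i ≠ 0} : Set (Fin d)).ncard ≤ n + 2
    · obtain ⟨K, hK, h⟩ := ih p hp h0 hne hc'
      exact ⟨K, by omega, h⟩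
    · obtain ⟨r, r0, rp, rne, rc, rs, j, hj, hrj⟩ := tp_extract x p hp h0 hne
      have hne' : ∃ i, p i - r i ≠ 0 := by
        by_contra! h
        have : r = p := by funext i; linarith [h i]
        subst this
        omega
      have hcard : ({i | p i - r i ≠ 0} : Set (Fin d)).ncard ≤ n + 2 := by
        have : ({i | p i - r i ≠ 0} : Set (Fin d)).ncard < ({i | p i ≠ 0} : Set (Fin d)).ncard := by
          apply Set.ncard_lt_ncard _ (Set.toFinite _)
          refine ⟨?_, ?_⟩
          · intro i hi hpi
            apply hi
            linarith [r0 i, rp i]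
          · intro h
            exact h (show p j ≠ 0 from hj) (by rw [hrj, sub_self])
        omega
      obtain ⟨K, hK, s, s0, sne, sc, ss, sp⟩ := ih (fun i => p i - r i)
        (fun i => sub_nonneg.2 (rp i)) (by simp [sub_mul, h0, rs]) hne' hcard
      refine ⟨K + 1, by omega, Fin.cons r s, ?_, ?_, ?_, ?_, ?_⟩
      · intro k; refine Fin.cases ?_ ?_ k
        · simpa using r0
        · simpa using s0
      · intro k; refine Fin.cases ?_ ?_ k
        · simpa using rne
        · simpa using sne
      · intro k; refine Fin.cases ?_ ?_ k
        · simpa using rc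
        · simpa using sc
      · intro k; refine Fin.cases ?_ ?_ k
        · simpa using rs
        · simpa using ss
      · intro i
        rw [Fin.sum_univ_succ]
        simp only [Fin.cons_zero, Fin.cons_succ]
        linarith [sp i]

/-- Let `E 0 < E 1 < ... < E (d-1)` be distinct real numbers and `p` a
probability distribution on them with mean `ε = ∑ i, p i * E i`.  Then there exist
`K ≤ d - 1`, nonnegative weights `w k` summing to `1`, and probability distributions
`q k` on the same points such that each `q k` is supported on at most two points,
each `q k` has mean `ε`, and `p = ∑ k, w k * q k`.  Consequently the weighted average
of the variances of the `q k` equals the variance of `p`. -/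
theorem compress_distribution_two_point_decomposition
    (d : ℕ) (hd : 2 ≤ d) (E : Fin d → ℝ) (hE : StrictMono E)
    (p : Fin d → ℝ) (hp : ∀ i, 0 ≤ p i) (hpsum : ∑ i, p i = 1) :
    ∃ (K : ℕ), K ≤ d - 1 ∧
      ∃ (w : Fin K → ℝ) (q : Fin K → Fin d → ℝ),
        (∀ k, 0 ≤ w k) ∧ (∑ k, w k = 1) ∧
        (∀ k i, 0 ≤ q k i) ∧ (∀ k, ∑ i, q k i = 1) ∧
        (∀ k, ({i | q k i ≠ 0} : Set (Fin d)).ncard ≤ 2) ∧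
        (∀ k, ∑ i, q k i * E i = ∑ i, p i * E i) ∧
        (∀ i, p i = ∑ k, w k * q k i) ∧
        (∑ k, w k * ((∑ i, q k i * E i ^ 2) - (∑ i, q k i * E i) ^ 2)
          = (∑ i, p i * E i ^ 2) - (∑ i, p i * E i) ^ 2) := by
  obtain ⟨n, rfl⟩ : ∃ n, d = n + 2 := ⟨d - 2, by omega⟩
  set ε := ∑ i, p i * E i with hε
  obtain ⟨K, hK, r, r0, rne, rc, rs, rp⟩ := tp_decomp (fun i => E i - ε) n p hp
    (by simp [mul_sub, ← Finset.sum_mul, hpsum, ← hε])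
    (by
      by_contra! h
      simp [h] at hpsum)
    (by
      refine (Set.ncard_le_ncard (Set.subset_univ _) (Set.toFinite _)).trans ?_
      simp [Set.ncard_univ])
  have wpos : ∀ k, 0 < ∑ i, r k i := by
    intro k
    obtain ⟨i, hi⟩ := rne k
    exact Finset.sum_pos' (fun i _ => r0 k i) ⟨i, by simp, lt_of_le_of_ne (r0 k i) (Ne.symm hi)⟩
  have hmean : ∀ k, ∑ i, (r k i / ∑ i, r k i) * E i = ε := by
    intro k
    have h := rs k
    simp only [mul_sub, Finset.sum_sub_distrib, ← Finset.sum_mul] at h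
    simp only [div_mul_eq_mul_div, ← Finset.sum_div]
    rw [div_eq_iff (wpos k).ne']
    linarith
  have hw : ∑ k, ∑ i, r k i = 1 := by
    rw [Finset.sum_comm, ← hpsum]
    exact Finset.sum_congr rfl fun i _ => (rp i).symm
  have hcancel : ∀ k i, (∑ i, r k i) * (r k i / ∑ i, r k i) = r k i := by
    intro k i
    exact mul_div_cancel₀ _ (wpos k).ne'
  refine ⟨K, by omega, fun k => ∑ i, r k i, fun k i => r k i / ∑ i, r k i,
    fun k => (wpos k).le, hw, fun k i => div_nonneg (r0 k i) (wpos k).le, ?_, ?_, hmean, ?_, ?_⟩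
  · intro k
    rw [← Finset.sum_div, div_self (wpos k).ne']
  · intro k
    have : ({i | r k i / ∑ i, r k i ≠ 0} : Set (Fin (n + 2))) = {i | r k i ≠ 0} := by
      ext i
      simp [(wpos k).ne']
    rw [this]
    exact rc k
  · intro i
    simp only [hcancel]
    exact rp i
  · simp only [hmean, mul_sub, Finset.sum_sub_distrib, ← Finset.sum_mul, hw, one_mul,
      Finset.mul_sum, ← mul_assoc]
    congr 1
    rw [Finset.sum_comm]
    refine Finset.sum_congr rfl fun i _ => ?_
    simp only [hcancel]
    rw [← Finset.sum_mul, ← rp i]
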